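/- Let (G,C) be a strongly connected inhomogeneous Mauldin–Williams graph in ℝ^d satisfying the SCOSC and let s₀ = s₀(G). Then for every pair of vertices i, j ∈ V there exist constants c > 0, a > 0 and ρ ∈ (0,1) such that for every k ∈ ℕ and every t > 0 with a·ρ^{k+1} ≤ e^{−t} < a·ρ^k, one has e^{−s₀t} N_{e^{−t}}(K_j^C) ≥ c · Σ_{ℓ=0}^{k} ρ^{ℓs₀} N_{ρ^ℓ}(C_i). -/

import Mathlib

open Set Filter Topology MeasureTheory Metric

noncomputable section

/-- Points of `ℝ^d`. -/
abbrev Pt (d : ℕ) := EuclideanSpace ℝ (Fin d)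

/-- The `r`-covering number of `A ⊆ ℝ^d`: the least number of closed balls of
radius `r` needed to cover `A`. -/
noncomputable def coveringNumber {d : ℕ} (A : Set (Pt d)) (r : ℝ) : ℕ :=
  sInf {k : ℕ | ∃ c : Fin k → Pt d, A ⊆ ⋃ i, Metric.closedBall (c i) r}

/-- A Mauldin–Williams graph in `ℝ^d` over a finite directed multigraph with
vertex type `V` and edge type `E`: each vertex `i` carries a non-empty compact
set `X i` equal to the closure of its interior, and each edge `e` carries a
contractive similarity `S e` of ratio `r e ∈ (0,1)` mapping `X (term e)` into
`X (init e)`. -/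
structure MWGraph (d : ℕ) (V E : Type) [Fintype V] [Fintype E] where
  init : E → V
  term : E → V
  X : V → Set (Pt d)
  S : E → Pt d → Pt d
  r : E → ℝ
  X_nonempty : ∀ i, (X i).Nonempty
  X_compact : ∀ i, IsCompact (X i)
  X_regular : ∀ i, closure (interior (X i)) = X i
  r_pos : ∀ e, 0 < r e
  r_lt_one : ∀ e, r e < 1
  S_maps : ∀ e, Set.MapsTo (S e) (X (term e)) (X (init e))
  S_sim : ∀ e x y, dist (S e x) (S e y) = r e * dist x y

namespace MWGraph

variable {d : ℕ} {V E : Type} [Fintype V] [Fintype E]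

variable (G : MWGraph d V E)

/-- `G.IsPathFrom j γ` holds iff the list of edges `γ` is a directed path
starting at vertex `j`. -/
def IsPathFrom : V → List E → Prop
  | _, [] => True
  | j, e :: es => G.init e = j ∧ IsPathFrom (G.term e) es

/-- Terminal vertex of the path `γ` starting at `j`. -/
def pathTerm : V → List E → V
  | j, [] => j
  | _, e :: es => pathTerm (G.term e) es

/-- `S_γ = S_{e₁} ∘ ⋯ ∘ S_{eₙ}` (with `S_∅ = id`). -/
def pathMap : List E → Pt d → Pt d
  | [] => id
  | e :: es => G.S e ∘ pathMap es

/-- `r_γ = r_{e₁} ⋯ r_{eₙ}` (with `r_∅ = 1`). -/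
def pathRatio (γ : List E) : ℝ := (γ.map G.r).prod

/-- The underlying multigraph is strongly connected: for every ordered pair of
vertices there is a (non-empty) directed path from the first to the second. -/
def StronglyConnected : Prop :=
  ∀ i j : V, ∃ γ : List E, γ ≠ [] ∧ G.IsPathFrom i γ ∧ G.pathTerm i γ = j

/-- `K` is the list of graph-directed self-similar sets of `G`: the unique list
of non-empty compact sets with `K i = ⋃_{e ∈ E_i} S_e (K (term e))`. -/
def IsAttractor (K : V → Set (Pt d)) : Prop :=
  (∀ i, IsCompact (K i)) ∧ (∀ i, (K i).Nonempty) ∧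
    ∀ i, K i = ⋃ e ∈ {e : E | G.init e = i}, G.S e '' K (G.term e)

/-- `C` is an admissible list of condensation sets: compact subsets of the `X i`. -/
def IsCondensation (C : V → Set (Pt d)) : Prop :=
  ∀ i, IsCompact (C i) ∧ C i ⊆ G.X i

/-- `K` is the list of inhomogeneous graph-directed self-similar sets of `(G, C)`:
the unique list of non-empty compact sets with
`K i = ⋃_{e ∈ E_i} S_e (K (term e)) ∪ C i`. -/
def IsInhomAttractor (C : V → Set (Pt d)) (K : V → Set (Pt d)) : Prop :=
  (∀ i, IsCompact (K i)) ∧ (∀ i, (K i).Nonempty) ∧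
    ∀ i, K i = (⋃ e ∈ {e : E | G.init e = i}, G.S e '' K (G.term e)) ∪ C i

/-- `G` satisfies the open set condition with the open sets `U`. -/
def IsOSCWith (U : V → Set (Pt d)) : Prop :=
  (∀ i, (U i).Nonempty) ∧ (∀ i, IsOpen (U i)) ∧ (∀ i, Bornology.IsBounded (U i)) ∧
    (∀ i, U i ⊆ G.X i) ∧
    (∀ i, (⋃ e ∈ {e : E | G.init e = i}, G.S e '' U (G.term e)) ⊆ U i) ∧
    ∀ e e' : E, G.init e = G.init e' → e ≠ e' →
      Disjoint (G.S e '' U (G.term e)) (G.S e' '' U (G.term e'))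

/-- The set `{-log r_γ : γ a directed cycle of G}`. -/
def cycleSet : Set ℝ :=
  {x : ℝ | ∃ (j : V) (γ : List E), γ ≠ [] ∧ G.IsPathFrom j γ ∧ G.pathTerm j γ = j ∧
    x = -Real.log (G.pathRatio γ)}

/-- `G_M`, the smallest closed additive subgroup of `ℝ` containing
`{-log r_γ : γ a directed cycle}`. -/
def GM : Set ℝ := closure ((AddSubgroup.closure (G.cycleSet) : AddSubgroup ℝ) : Set ℝ)

variable [DecidableEq V]

/-- The matrix `A_G^s` with entries `(A_G^s)_{ij} = Σ_{e ∈ E_{ij}} r_e^s`. -/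
def Amatrix (s : ℝ) : Matrix V V ℝ :=
  Matrix.of fun i j => ∑ e : E, if G.init e = i ∧ G.term e = j then G.r e ^ s else 0

end MWGraph

/-- Spectral radius of a real square matrix: the largest modulus of a complex
eigenvalue. -/
noncomputable def matrixSpectralRadius {n : Type} [Fintype n] [DecidableEq n]
    (A : Matrix n n ℝ) : ℝ :=
  sSup {x : ℝ | ∃ μ : ℂ, μ ∈ spectrum ℂ (A.map (fun a : ℝ => (a : ℂ))) ∧ x = ‖μ‖}

/-- `s` is the (unique) exponent `s ≥ 0` with `ρ(A_G^s) = 1`, i.e. `s = s₀(G)`. -/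
def IsS0 {d : ℕ} {V E : Type} [Fintype V] [Fintype E] [DecidableEq V]
    (G : MWGraph d V E) (s : ℝ) : Prop :=
  0 ≤ s ∧ matrixSpectralRadius (G.Amatrix s) = 1

/-! ### Similarities of Euclidean space -/

section Similarity

variable {d : ℕ} {f : Pt d → Pt d} {q : ℝ}

lemma surjective_of_dist_eq_mul (hq : 0 < q) (hf : ∀ x y, dist (f x) (f y) = q * dist x y) :
    Function.Surjective f := by
  have hiso : Isometry fun x => q⁻¹ • f x := by
    refine Isometry.of_dist_eq fun x y => ?_
    rw [dist_smul₀, hf, Real.norm_of_nonneg (inv_nonneg.2 hq.le), inv_mul_cancel_left₀ hq.ne']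
  intro y
  obtain ⟨x, hx⟩ :=
    (hiso.affineIsometryOfStrictConvexSpace.toAffineIsometryEquiv rfl).surjective (q⁻¹ • y)
  have hx' : q⁻¹ • f x = q⁻¹ • y := hx
  exact ⟨x, smul_right_injective _ (inv_ne_zero hq.ne') hx'⟩

lemma continuous_of_dist_eq_mul (hq : 0 < q) (hf : ∀ x y, dist (f x) (f y) = q * dist x y) :
    Continuous f :=
  (LipschitzWith.of_dist_le_mul (K := ⟨q, hq.le⟩) fun x y => (hf x y).le).continuous

lemma injective_of_dist_eq_mul (hq : 0 < q) (hf : ∀ x y, dist (f x) (f y) = q * dist x y) :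
    Function.Injective f := by
  intro x y hxy
  have := hf x y
  rw [hxy, dist_self] at this
  exact dist_eq_zero.1 ((mul_eq_zero.1 this.symm).resolve_left hq.ne')

lemma isOpen_image_of_dist_eq_mul (hq : 0 < q) (hf : ∀ x y, dist (f x) (f y) = q * dist x y)
    {U : Set (Pt d)} (hU : IsOpen U) : IsOpen (f '' U) := by
  rw [Metric.isOpen_iff]
  rintro _ ⟨x, hx, rfl⟩
  obtain ⟨ε, hε, hball⟩ := Metric.isOpen_iff.1 hU x hx
  refine ⟨q * ε, mul_pos hq hε, fun z hz => ?_⟩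
  obtain ⟨z, rfl⟩ := surjective_of_dist_eq_mul hq hf z
  rw [mem_ball, hf] at hz
  exact mem_image_of_mem f (hball (lt_of_mul_lt_mul_left hz hq.le))

end Similarity

/-! ### Covering numbers -/

section Covering

variable {d : ℕ}

lemma exists_closedBall_cover {A : Set (Pt d)} (hA : IsCompact A) {r : ℝ} (hr : 0 < r) :
    {k : ℕ | ∃ c : Fin k → Pt d, A ⊆ ⋃ i, closedBall (c i) r}.Nonempty := by
  obtain ⟨t, -, htf, hcov⟩ := hA.finite_cover_balls hr
  refine ⟨htf.toFinset.card, fun n => (htf.toFinset.equivFin.symm n : Pt d), fun x hx => ?_⟩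
  obtain ⟨y, hy, hxy⟩ := mem_iUnion₂.1 (hcov hx)
  exact mem_iUnion.2 ⟨htf.toFinset.equivFin ⟨y, htf.mem_toFinset.2 hy⟩,
    by simpa using ball_subset_closedBall hxy⟩

lemma coveringNumber_spec {A : Set (Pt d)} (hA : IsCompact A) {r : ℝ} (hr : 0 < r) :
    ∃ c : Fin (coveringNumber A r) → Pt d, A ⊆ ⋃ i, closedBall (c i) r :=
  Nat.sInf_mem (exists_closedBall_cover hA hr)

lemma coveringNumber_le_card {A : Set (Pt d)} {r : ℝ} {ι : Type*} (s : Finset ι) (c : ι → Pt d)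
    (h : A ⊆ ⋃ i ∈ s, closedBall (c i) r) : coveringNumber A r ≤ s.card := by
  refine Nat.sInf_le ⟨fun n => c (s.equivFin.symm n), fun x hx => ?_⟩
  obtain ⟨i, hi, hxi⟩ := mem_iUnion₂.1 (h hx)
  exact mem_iUnion.2 ⟨s.equivFin ⟨i, hi⟩, by simpa using hxi⟩

lemma coveringNumber_mono_set {A B : Set (Pt d)} (hB : IsCompact B) {r : ℝ} (hr : 0 < r)
    (h : A ⊆ B) : coveringNumber A r ≤ coveringNumber B r := by
  obtain ⟨c, hc⟩ := coveringNumber_spec hB hr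
  exact Nat.sInf_le ⟨c, h.trans hc⟩

/-- Covering numbers of a set and of its image under a surjective similarity of ratio `q`. -/
lemma coveringNumber_le_image {f : Pt d → Pt d} {q : ℝ} (hq : 0 < q)
    (hf : ∀ x y, dist (f x) (f y) = q * dist x y) (hs : Function.Surjective f)
    {A : Set (Pt d)} (hA : IsCompact A) {r r' : ℝ} (hr : 0 < r) (h : r ≤ q * r') :
    coveringNumber A r' ≤ coveringNumber (f '' A) r := by
  obtain ⟨c, hc⟩ := coveringNumber_spec (hA.image (continuous_of_dist_eq_mul hq hf)) hr
  choose g hg using hs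
  refine Nat.sInf_le ⟨fun n => g (c n), fun x hx => ?_⟩
  obtain ⟨n, hn⟩ := mem_iUnion.1 (hc (mem_image_of_mem f hx))
  refine mem_iUnion.2 ⟨n, ?_⟩
  rw [mem_closedBall] at hn ⊢
  have := hf x (g (c n))
  rw [hg] at this
  exact le_of_mul_le_mul_left (by linarith) hq

/-- Covering numbers are superadditive over families of `2r`-separated subsets. -/
lemma sum_coveringNumber_le {K : Set (Pt d)} (hK : IsCompact K) {r : ℝ} (hr : 0 < r)
    {ι : Type*} (I : Finset ι) (A : ι → Set (Pt d)) (hAK : ∀ p ∈ I, A p ⊆ K)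
    (hsep : ∀ p ∈ I, ∀ q ∈ I, p ≠ q → ∀ x ∈ A p, ∀ y ∈ A q, 2 * r < dist x y) :
    ∑ p ∈ I, coveringNumber (A p) r ≤ coveringNumber K r := by
  classical
  obtain ⟨c, hc⟩ := coveringNumber_spec hK hr
  let J : ι → Finset (Fin (coveringNumber K r)) := fun p =>
    Finset.univ.filter fun n => (closedBall (c n) r ∩ A p).Nonempty
  have hJ : (I : Set ι).PairwiseDisjoint J := by
    intro p hp q hq hpq
    refine Finset.disjoint_left.2 fun n hnp hnq => ?_
    obtain ⟨x, hxc, hx⟩ := (Finset.mem_filter.1 hnp).2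
    obtain ⟨y, hyc, hy⟩ := (Finset.mem_filter.1 hnq).2
    have h1 := hsep p hp q hq hpq x hx y hy
    have h2 := dist_triangle_right x y (c n)
    rw [mem_closedBall] at hxc hyc
    linarith
  calc ∑ p ∈ I, coveringNumber (A p) r ≤ ∑ p ∈ I, (J p).card := by
        refine Finset.sum_le_sum fun p hp => coveringNumber_le_card (J p) c fun x hx => ?_
        obtain ⟨n, hn⟩ := mem_iUnion.1 (hc (hAK p hp hx))
        exact mem_iUnion₂.2 ⟨n, Finset.mem_filter.2 ⟨Finset.mem_univ _, x, hn, hx⟩, hn⟩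
    _ = (I.biUnion J).card := (Finset.card_biUnion hJ).symm
    _ ≤ coveringNumber K r := by simpa using Finset.card_le_univ (I.biUnion J)

end Covering

lemma exists_pos_forall_le {ι : Type*} [Finite ι] (f : ι → ℝ) (hf : ∀ i, 0 < f i) :
    ∃ ε : ℝ, 0 < ε ∧ ε ≤ 1 ∧ ∀ i, ε ≤ f i := by
  cases isEmpty_or_nonempty ι
  · exact ⟨1, one_pos, le_rfl, fun i => isEmptyElim i⟩
  · obtain ⟨m, hm⟩ := Finite.exists_min f
    exact ⟨min (f m) 1, lt_min (hf m) one_pos, min_le_right _ _, fun i =>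
      (min_le_left _ _).trans (hm i)⟩

/-! ### Paths in a Mauldin–Williams graph -/

namespace MWGraph

variable {d : ℕ} {V E : Type} [Fintype V] [Fintype E] (G : MWGraph d V E)

lemma pathRatio_cons (e : E) (γ : List E) : G.pathRatio (e :: γ) = G.r e * G.pathRatio γ := by
  simp [pathRatio]

lemma pathRatio_append (γ η : List E) :
    G.pathRatio (γ ++ η) = G.pathRatio γ * G.pathRatio η := by
  simp [pathRatio]

lemma pathRatio_pos (γ : List E) : 0 < G.pathRatio γ := by
  induction γ with
  | nil => simp [pathRatio]
  | cons e γ ih => rw [pathRatio_cons]; exact mul_pos (G.r_pos e) ih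

lemma pathRatio_le_pow {R : ℝ} (hR0 : 0 ≤ R) (hR : ∀ e, G.r e ≤ R) (γ : List E) :
    G.pathRatio γ ≤ R ^ γ.length := by
  induction γ with
  | nil => simp [pathRatio]
  | cons e γ ih =>
    rw [pathRatio_cons, List.length_cons, pow_succ']
    exact mul_le_mul (hR e) ih (G.pathRatio_pos γ).le hR0

lemma pathRatio_le_one (γ : List E) : G.pathRatio γ ≤ 1 := by
  simpa using G.pathRatio_le_pow zero_le_one (fun e => (G.r_lt_one e).le) γ

lemma pathRatio_antitone {γ η : List E} (h : γ <+: η) : G.pathRatio η ≤ G.pathRatio γ := by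
  obtain ⟨τ, rfl⟩ := h
  rw [pathRatio_append]
  exact mul_le_of_le_one_right (G.pathRatio_pos γ).le (G.pathRatio_le_one τ)

lemma dist_pathMap (γ : List E) (x y : Pt d) :
    dist (G.pathMap γ x) (G.pathMap γ y) = G.pathRatio γ * dist x y := by
  induction γ with
  | nil => simp [pathMap, pathRatio]
  | cons e γ ih => simp only [pathMap, Function.comp_apply, G.S_sim, ih, pathRatio_cons]; ring

lemma pathMap_append (γ η : List E) (x : Pt d) :
    G.pathMap (γ ++ η) x = G.pathMap γ (G.pathMap η x) := by
  induction γ with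
  | nil => rfl
  | cons e γ ih => simp [pathMap, ih]

lemma isPathFrom_append {v : V} {γ η : List E} :
    G.IsPathFrom v (γ ++ η) ↔ G.IsPathFrom v γ ∧ G.IsPathFrom (G.pathTerm v γ) η := by
  induction γ generalizing v with
  | nil => simp [IsPathFrom, pathTerm]
  | cons e γ ih => simp [IsPathFrom, pathTerm, ih, and_assoc]

lemma pathTerm_append (v : V) (γ η : List E) :
    G.pathTerm v (γ ++ η) = G.pathTerm (G.pathTerm v γ) η := by
  induction γ generalizing v with
  | nil => rfl
  | cons e γ ih => simp [pathTerm, ih]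

variable {G}

/-- If `A` contains the images of its members along edges, then it contains them along paths. -/
lemma mapsTo_pathMap {A : V → Set (Pt d)}
    (hA : ∀ e, MapsTo (G.S e) (A (G.term e)) (A (G.init e))) {v : V} {γ : List E}
    (hγ : G.IsPathFrom v γ) : MapsTo (G.pathMap γ) (A (G.pathTerm v γ)) (A v) := by
  induction γ generalizing v with
  | nil => exact mapsTo_id _
  | cons e γ ih =>
    obtain ⟨rfl, hγ⟩ := hγ
    exact (hA e).comp (ih hγ)

lemma IsInhomAttractor.mapsTo {C K : V → Set (Pt d)} (h : G.IsInhomAttractor C K) (e : E) :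
    MapsTo (G.S e) (K (G.term e)) (K (G.init e)) := by
  intro x hx
  rw [h.2.2 (G.init e)]
  exact Or.inl (mem_iUnion₂.2 ⟨e, rfl, mem_image_of_mem _ hx⟩)

lemma IsInhomAttractor.condensation_subset {C K : V → Set (Pt d)} (h : G.IsInhomAttractor C K)
    (v : V) : C v ⊆ K v := by
  rw [h.2.2 v]
  exact subset_union_right

lemma IsOSCWith.mapsTo {U : V → Set (Pt d)} (h : G.IsOSCWith U) (e : E) :
    MapsTo (G.S e) (U (G.term e)) (U (G.init e)) := fun _ hx =>
  h.2.2.2.2.1 _ (mem_iUnion₂.2 ⟨e, rfl, mem_image_of_mem _ hx⟩)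

lemma continuous_S (e : E) : Continuous (G.S e) :=
  continuous_of_dist_eq_mul (G.r_pos e) (G.S_sim e)

lemma IsOSCWith.mapsTo_closure {U : V → Set (Pt d)} (h : G.IsOSCWith U) (e : E) :
    MapsTo (G.S e) (closure (U (G.term e))) (closure (U (G.init e))) :=
  (h.mapsTo e).closure (continuous_S e)

/-- A point of `K v` lies in cylinders of arbitrary length. -/
lemma IsAttractor.exists_path {K : V → Set (Pt d)} (h : G.IsAttractor K) (n : ℕ) {v : V}
    {x : Pt d} (hx : x ∈ K v) : ∃ γ : List E, γ.length = n ∧ G.IsPathFrom v γ ∧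
      x ∈ G.pathMap γ '' K (G.pathTerm v γ) := by
  induction n generalizing v x with
  | zero => exact ⟨[], rfl, trivial, x, hx, rfl⟩
  | succ n ih =>
    rw [h.2.2 v] at hx
    obtain ⟨e, rfl, y, hy, rfl⟩ := mem_iUnion₂.1 hx
    obtain ⟨γ, hn, hγ, z, hz, rfl⟩ := ih hy
    exact ⟨e :: γ, by simp [hn], ⟨rfl, hγ⟩, z, hz, rfl⟩

/-- Under the SCOSC, `S_σ(C)` avoids `S_η(U)` unless `η` is a prefix of `σ`. -/
lemma pathMap_notMem_image {C U : V → Set (Pt d)} (hU : G.IsOSCWith U)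
    (hCU : ∀ i, C i ⊆ closure (U i) \ ⋃ e ∈ {e : E | G.init e = i}, G.S e '' U (G.term e))
    {v : V} {σ η : List E} (hσ : G.IsPathFrom v σ) (hη : G.IsPathFrom v η) (hση : ¬ η <+: σ)
    {x : Pt d} (hx : x ∈ C (G.pathTerm v σ)) :
    G.pathMap σ x ∉ G.pathMap η '' U (G.pathTerm v η) := by
  induction σ generalizing v η with
  | nil =>
    cases η with
    | nil => simp at hση
    | cons e τ =>
      obtain ⟨rfl, hτ⟩ := hη
      rintro ⟨y, hy, hyx⟩
      refine (hCU _ hx).2 (mem_iUnion₂.2 ⟨e, rfl, G.pathMap τ y, ?_, hyx⟩)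
      exact mapsTo_pathMap hU.mapsTo hτ hy
  | cons e σ ih =>
    cases η with
    | nil => simp at hση
    | cons e' τ =>
      obtain ⟨hv, hσ⟩ := hσ
      obtain ⟨hv', hτ⟩ := hη
      rintro ⟨y, hy, hyx⟩
      by_cases hee : e = e'
      · subst hee
        refine ih hσ hτ (fun h => hση (List.cons_prefix_cons.2 ⟨rfl, h⟩)) hx ⟨y, hy, ?_⟩
        exact injective_of_dist_eq_mul (G.r_pos e) (G.S_sim e) hyx
      · have hdisj := (hU.2.2.2.2.2 e e' (hv.trans hv'.symm) hee).closure_left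
          (isOpen_image_of_dist_eq_mul (G.r_pos e') (G.S_sim e') (hU.2.1 _))
        have hxU : G.pathMap σ x ∈ closure (U (G.term e)) :=
          mapsTo_pathMap (A := fun i => closure (U i)) hU.mapsTo_closure hσ (hCU _ hx).1
        exact Set.disjoint_left.1 hdisj
          (image_closure_subset_closure_image (continuous_S e) (mem_image_of_mem _ hxU))
          ⟨G.pathMap τ y, mapsTo_pathMap hU.mapsTo hτ hy, hyx⟩

lemma exists_ratio_bound (G : MWGraph d V E) : ∃ R : ℝ, 0 < R ∧ R < 1 ∧ ∀ e, G.r e ≤ R := by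
  obtain ⟨ε, hε, hε1, h⟩ := exists_pos_forall_le (fun e => 1 - G.r e)
    fun e => sub_pos.2 (G.r_lt_one e)
  exact ⟨1 - ε / 2, by linarith, by linarith, fun e => by linarith [h e]⟩

/-- Every vertex `v` admits a path to `i` whose cylinder lies well inside `U v`. -/
lemma exists_path_closedBall_subset (hSC : G.StronglyConnected) {K U : V → Set (Pt d)}
    (hK : G.IsAttractor K) (hU : G.IsOSCWith U) (hUK : ∀ i, (U i ∩ K i).Nonempty) (v i : V) :
    ∃ (ω : List E) (δ : ℝ), 0 < δ ∧ G.IsPathFrom v ω ∧ G.pathTerm v ω = i ∧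
      ∀ x ∈ closure (U i), closedBall (G.pathMap ω x) δ ⊆ U v := by
  obtain ⟨x, hxU, hxK⟩ := hUK v
  obtain ⟨ε, hε, hball⟩ := Metric.isOpen_iff.1 (hU.2.1 v) x hxU
  have hbdd : Bornology.IsBounded (⋃ w, (K w ∪ closure (U w))) :=
    (Bornology.isBounded_iUnion).2 fun w => (hK.1 w).isBounded.union (hU.2.2.1 w).closure
  obtain ⟨D, hD⟩ := Metric.isBounded_iff.1 hbdd
  obtain ⟨R, hR0, hR1, hR⟩ := exists_ratio_bound G
  have hD' : 0 < |D| + 1 := by positivity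
  obtain ⟨n, hn⟩ := exists_pow_lt_of_lt_one (div_pos (half_pos hε) hD') hR1
  obtain ⟨γ, hγn, hγ, y, hy, rfl⟩ := hK.exists_path n hxK
  obtain ⟨η, -, hη, hηi⟩ := hSC (G.pathTerm v γ) i
  refine ⟨γ ++ η, ε / 4, by linarith, G.isPathFrom_append.2 ⟨hγ, hη⟩,
    by rw [pathTerm_append, hηi], fun z hz w hw => hball ?_⟩
  have hz' : G.pathMap η z ∈ closure (U (G.pathTerm v γ)) :=
    mapsTo_pathMap (A := fun i => closure (U i)) hU.mapsTo_closure hη (by rwa [hηi])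
  have h1 : dist (G.pathMap η z) y ≤ |D| + 1 := by
    have := hD (mem_iUnion.2 ⟨_, Or.inr hz'⟩) (mem_iUnion.2 ⟨_, Or.inl hy⟩)
    linarith [le_abs_self D]
  have h2 : dist (G.pathMap (γ ++ η) z) (G.pathMap γ y) ≤ ε / 2 := by
    rw [pathMap_append, dist_pathMap]
    have h3 := G.pathRatio_le_pow hR0.le hR γ
    rw [hγn] at h3
    rw [lt_div_iff₀ hD'] at hn
    exact (mul_le_mul h3 h1 dist_nonneg (by positivity)).trans hn.le
  rw [mem_closedBall] at hw
  rw [mem_ball]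
  linarith [dist_triangle w (G.pathMap (γ ++ η) z) (G.pathMap γ y)]

/-- First passage cut sets of paths whose ratios are comparable to `τ`, with the mass of a
subinvariant vector `h` of the matrix `(∑_{e ∈ E_{ij}} r_e^s)`. -/
lemma exists_cutSet [DecidableEq V] (G : MWGraph d V E) {s : ℝ} {h : V → ℝ}
    (hh : ∀ v, h v ≤ ∑ e with G.init e = v, G.r e ^ s * h (G.term e))
    {b : ℝ} (hb : 0 < b) (hbr : ∀ e, b ≤ G.r e) {τ : ℝ} (hτ : 0 < τ) (hbτ : b * τ ≤ 1) (v : V) :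
    ∃ F : Finset (List E), (∀ γ ∈ F, G.IsPathFrom v γ) ∧ (∀ γ ∈ F, b * τ ≤ G.pathRatio γ) ∧
      (∀ γ ∈ F, G.pathRatio γ ≤ τ) ∧ (∀ γ ∈ F, ∀ η ∈ F, γ <+: η → γ = η) ∧
      h v ≤ ∑ γ ∈ F, G.pathRatio γ ^ s * h (G.pathTerm v γ) := by
  classical
  obtain ⟨R, hR0, hR1, hR⟩ := exists_ratio_bound G
  obtain ⟨n, hn⟩ := exists_pow_lt_of_lt_one hτ hR1
  have key : ∀ n : ℕ, ∀ τ : ℝ, 0 < τ → b * τ ≤ 1 → R ^ n ≤ τ → ∀ v : V,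
      ∃ F : Finset (List E), (∀ γ ∈ F, G.IsPathFrom v γ) ∧ (∀ γ ∈ F, b * τ ≤ G.pathRatio γ) ∧
      (∀ γ ∈ F, G.pathRatio γ ≤ τ) ∧ (∀ γ ∈ F, ∀ η ∈ F, γ <+: η → γ = η) ∧
      h v ≤ ∑ γ ∈ F, G.pathRatio γ ^ s * h (G.pathTerm v γ) := by
    have base : ∀ τ : ℝ, b * τ ≤ 1 → 1 ≤ τ → ∀ v : V,
        ∃ F : Finset (List E), (∀ γ ∈ F, G.IsPathFrom v γ) ∧ (∀ γ ∈ F, b * τ ≤ G.pathRatio γ) ∧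
        (∀ γ ∈ F, G.pathRatio γ ≤ τ) ∧ (∀ γ ∈ F, ∀ η ∈ F, γ <+: η → γ = η) ∧
        h v ≤ ∑ γ ∈ F, G.pathRatio γ ^ s * h (G.pathTerm v γ) := fun τ hbτ hτ1 v =>
      ⟨{[]}, by simp [IsPathFrom], by simpa [pathRatio], by simpa [pathRatio], by simp,
        by simp [pathRatio, pathTerm]⟩
    intro n
    induction n with
    | zero => exact fun τ _ hbτ hτ1 v => base τ hbτ (by simpa using hτ1) v
    | succ n ih =>
      intro τ hτ hbτ hRτ v
      rcases le_or_gt 1 τ with hτ1 | hτ1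
      · exact base τ hbτ hτ1 v
      have step : ∀ e, ∃ F : Finset (List E), (∀ γ ∈ F, G.IsPathFrom (G.term e) γ) ∧
          (∀ γ ∈ F, b * (τ / G.r e) ≤ G.pathRatio γ) ∧ (∀ γ ∈ F, G.pathRatio γ ≤ τ / G.r e) ∧
          (∀ γ ∈ F, ∀ η ∈ F, γ <+: η → γ = η) ∧
          h (G.term e) ≤ ∑ γ ∈ F, G.pathRatio γ ^ s * h (G.pathTerm (G.term e) γ) := by
        intro e
        have hr := G.r_pos e
        refine ih _ (div_pos hτ hr) ?_ ?_ _
        · rw [← mul_div_assoc, div_le_one hr]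
          exact (mul_le_of_le_one_right hb.le hτ1.le).trans (hbr e)
        · rw [le_div_iff₀ hr]
          calc R ^ n * G.r e ≤ R ^ n * R := by gcongr; exact hR e
            _ ≤ τ := by rwa [← pow_succ]
      choose F hpath hlow hup hanti hmass using step
      let T : E → Finset (List E) := fun e =>
        (F e).map ⟨fun γ => e :: γ, List.cons_injective⟩
      have hmem : ∀ γ, γ ∈ (Finset.univ.filter fun e => G.init e = v).biUnion T ↔
          ∃ e, G.init e = v ∧ ∃ η ∈ F e, e :: η = γ := by
        intro γ
        simp [T]
      refine ⟨(Finset.univ.filter fun e => G.init e = v).biUnion T, ?_, ?_, ?_, ?_, ?_⟩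
      · intro γ hγ
        obtain ⟨e, he, η, hη, rfl⟩ := (hmem γ).1 hγ
        exact ⟨he, hpath e η hη⟩
      · intro γ hγ
        obtain ⟨e, he, η, hη, rfl⟩ := (hmem γ).1 hγ
        have := hlow e η hη
        rw [← mul_div_assoc, div_le_iff₀ (G.r_pos e)] at this
        rw [pathRatio_cons]
        linarith
      · intro γ hγ
        obtain ⟨e, he, η, hη, rfl⟩ := (hmem γ).1 hγ
        have := hup e η hη
        rw [le_div_iff₀ (G.r_pos e)] at this
        rw [pathRatio_cons]
        linarith
      · intro γ hγ γ' hγ' hpre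
        obtain ⟨e, he, η, hη, rfl⟩ := (hmem γ).1 hγ
        obtain ⟨e', he', η', hη', rfl⟩ := (hmem γ').1 hγ'
        obtain ⟨rfl, hpre'⟩ := List.cons_prefix_cons.1 hpre
        rw [hanti e η hη η' hη' hpre']
      · rw [Finset.sum_biUnion]
        · refine (hh v).trans (Finset.sum_le_sum fun e he => ?_)
          rw [Finset.sum_map]
          refine (mul_le_mul_of_nonneg_left (hmass e)
            (Real.rpow_nonneg (G.r_pos e).le s)).trans_eq ?_
          rw [Finset.mul_sum]
          refine Finset.sum_congr rfl fun γ _ => ?_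
          simp only [Function.Embedding.coeFn_mk, pathRatio_cons, pathTerm]
          rw [Real.mul_rpow (G.r_pos e).le (G.pathRatio_pos γ).le, mul_assoc]
        · intro e _ e' _ hee
          refine Finset.disjoint_left.2 fun γ hγ hγ' => hee ?_
          obtain ⟨η, _, rfl⟩ := Finset.mem_map.1 hγ
          obtain ⟨η', _, h'⟩ := Finset.mem_map.1 hγ'
          exact ((List.cons.injEq ..).mp h').1.symm
  exact key n τ hτ hbτ hn.le v

lemma exists_subinvariant [DecidableEq V] {s : ℝ}
    (hs : matrixSpectralRadius (G.Amatrix s) = 1) :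
    ∃ h : V → ℝ, (∀ v, 0 ≤ h v) ∧ (∃ v, 0 < h v) ∧
      ∀ v, h v ≤ ∑ e with G.init e = v, G.r e ^ s * h (G.term e) := by
  set M : Matrix V V ℂ := (G.Amatrix s).map (fun a : ℝ => (a : ℂ)) with hM
  obtain ⟨μ, hμ, hμ1⟩ : ∃ μ : ℂ, μ ∈ spectrum ℂ M ∧ (1 : ℝ) = ‖μ‖ := by
    have hfin : {x : ℝ | ∃ μ : ℂ, μ ∈ spectrum ℂ M ∧ x = ‖μ‖}.Finite := by
      refine (M.finite_spectrum.image fun μ => ‖μ‖).subset ?_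
      rintro x ⟨μ, hμ, rfl⟩
      exact mem_image_of_mem _ hμ
    have hne : {x : ℝ | ∃ μ : ℂ, μ ∈ spectrum ℂ M ∧ x = ‖μ‖}.Nonempty := by
      by_contra hemp
      rw [matrixSpectralRadius, not_nonempty_iff_eq_empty.1 hemp, Real.sSup_empty] at hs
      exact zero_ne_one hs
    have := hne.csSup_mem hfin
    rwa [show sSup {x : ℝ | ∃ μ : ℂ, μ ∈ spectrum ℂ M ∧ x = ‖μ‖} = 1 from hs] at this
  rw [← Matrix.spectrum_toLin', ← Module.End.hasEigenvalue_iff_mem_spectrum] at hμ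
  obtain ⟨x, hx⟩ := hμ.exists_hasEigenvector
  refine ⟨fun v => ‖x v‖, fun v => norm_nonneg _, ?_, fun v => ?_⟩
  · obtain ⟨v, hv⟩ := Function.ne_iff.1 hx.2
    exact ⟨v, norm_pos_iff.2 hv⟩
  · have h1 : ∑ w, M v w * x w = μ * x v := by
      have := congrFun hx.apply_eq_smul v
      simpa [Matrix.toLin'_apply, Matrix.mulVec, dotProduct] using this
    have h2 : ∑ w, M v w * x w = ∑ e with G.init e = v, ((G.r e ^ s : ℝ) : ℂ) * x (G.term e) := by
      simp only [hM, Matrix.map_apply, Amatrix, Matrix.of_apply, Complex.ofReal_sum,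
        Finset.sum_mul]
      rw [Finset.sum_comm, Finset.sum_filter]
      refine Finset.sum_congr rfl fun e _ => ?_
      by_cases he : G.init e = v <;> simp [he, apply_ite (Complex.ofReal)]
    calc ‖x v‖ = ‖μ * x v‖ := by rw [norm_mul, ← hμ1, one_mul]
      _ = ‖∑ e with G.init e = v, ((G.r e ^ s : ℝ) : ℂ) * x (G.term e)‖ := by rw [← h1, h2]
      _ ≤ _ := (norm_sum_le _ _).trans_eq (Finset.sum_congr rfl fun e _ => by
          rw [norm_mul, Complex.norm_real,
            Real.norm_of_nonneg (Real.rpow_nonneg (G.r_pos e).le s)])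

/-- If `y` lies deep inside `U (pathTerm v γ)`, points outside `S_γ(U)` are far from `S_γ y`. -/
lemma lt_dist_pathMap {A : Set (Pt d)} {γ : List E} {y z : Pt d} {δ : ℝ}
    (hy : closedBall y δ ⊆ A) (hz : z ∉ G.pathMap γ '' A) :
    G.pathRatio γ * δ < dist z (G.pathMap γ y) := by
  obtain ⟨z, rfl⟩ := surjective_of_dist_eq_mul (G.pathRatio_pos γ) (G.dist_pathMap γ) z
  rw [dist_pathMap]
  refine mul_lt_mul_of_pos_left (lt_of_not_ge fun h => hz ?_) (G.pathRatio_pos γ)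
  exact mem_image_of_mem _ (hy h)

/-- The lower bound on covering numbers at a vertex charged by a subinvariant vector. -/
lemma exists_sum_le_coveringNumber [DecidableEq V] (hSC : G.StronglyConnected) {C K KC U : V → Set (Pt d)}
    (hC : G.IsCondensation C) (hK : G.IsAttractor K) (hKC : G.IsInhomAttractor C KC)
    (hU : G.IsOSCWith U) (hUK : ∀ i, (U i ∩ K i).Nonempty)
    (hCU : ∀ i, C i ⊆ closure (U i) \ ⋃ e ∈ {e : E | G.init e = i}, G.S e '' U (G.term e))
    {s : ℝ} (hs : 0 ≤ s) {h : V → ℝ} (h0 : ∀ v, 0 ≤ h v)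
    (hh : ∀ v, h v ≤ ∑ e with G.init e = v, G.r e ^ s * h (G.term e))
    {v : V} (hv : 0 < h v) (i : V) :
    ∃ c a ρ : ℝ, 0 < c ∧ 0 < a ∧ 0 < ρ ∧ ρ < 1 ∧ ∀ (k : ℕ) (r : ℝ), 0 < r → r ≤ a * ρ ^ k →
      c * ∑ ℓ ∈ Finset.range (k + 1), ρ ^ ((ℓ : ℝ) * s) * (coveringNumber (C i) (ρ ^ ℓ) : ℝ) ≤
        ρ ^ ((k : ℝ) * s) * (coveringNumber (KC v) r : ℝ) := by
  choose ω δ' hδ' hωpath hωterm hωball using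
    fun w => exists_path_closedBall_subset hSC hK hU hUK w i
  obtain ⟨δ, hδ, hδ1, hδle⟩ := exists_pos_forall_le δ' hδ'
  obtain ⟨b, hb, hb1, hbr⟩ := exists_pos_forall_le G.r G.r_pos
  obtain ⟨q, hq, hq1, hqω⟩ := exists_pos_forall_le (fun w => G.pathRatio (ω w))
    fun w => G.pathRatio_pos _
  have : Nonempty V := ⟨v⟩
  obtain ⟨w₀, hmax⟩ := Finite.exists_max h
  have hmaxpos : 0 < h w₀ := hv.trans_le (hmax v)
  have hbq : 0 < b * q := mul_pos hb hq
  have hbq1 : b * q ≤ 1 := mul_le_one₀ hb1 hq.le hq1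
  set ρ : ℝ := b * q / 2 with hρdef
  have hρ : 0 < ρ := half_pos hbq
  have hρ1 : ρ < 1 := by linarith
  have hρbq : ρ < b * q := half_lt_self hbq
  have hρpow : ∀ m : ℕ, 0 < ρ ^ m := fun m => pow_pos hρ m
  choose F hFpath hFlow hFup hFanti hFmass using fun m : ℕ =>
    exists_cutSet G hh hb hbr (hρpow m)
      (mul_le_one₀ hb1 (hρpow m).le (pow_le_one₀ hρ.le hρ1.le)) v
  have hcard : ∀ m, h v / h w₀ ≤ (F m).card * ρ ^ ((m : ℝ) * s) := by
    intro m
    rw [div_le_iff₀ hmaxpos]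
    calc h v ≤ ∑ γ ∈ F m, G.pathRatio γ ^ s * h (G.pathTerm v γ) := hFmass m
      _ ≤ ∑ γ ∈ F m, ρ ^ ((m : ℝ) * s) * h w₀ := by
        refine Finset.sum_le_sum fun γ hγ => mul_le_mul ?_ (hmax _) (h0 _) (by positivity)
        rw [Real.rpow_mul hρ.le, Real.rpow_natCast]
        exact Real.rpow_le_rpow (G.pathRatio_pos γ).le (hFup m γ hγ) hs
      _ = _ := by rw [Finset.sum_const, nsmul_eq_mul, mul_assoc]
  refine ⟨h v / h w₀, b * q * δ / 2, ρ, div_pos hv hmaxpos, by positivity, hρ, hρ1, ?_⟩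
  intro k r hr hrk
  let A : (Σ _ : ℕ, List E) → Set (Pt d) := fun p =>
    G.pathMap (p.2 ++ ω (G.pathTerm v p.2)) '' C i
  -- distinct pieces are separated at the scale of the smaller one
  have hsep' : ∀ m m' γ η, m ≤ m' → m' ≤ k → γ ∈ F m → η ∈ F m' →
      (⟨m, γ⟩ : Σ _ : ℕ, List E) ≠ ⟨m', η⟩ → ∀ x ∈ A ⟨m, γ⟩, ∀ y ∈ A ⟨m', η⟩,
      2 * r < dist x y := by
    rintro m m' γ η hmm hmk hγ hη hne _ ⟨x, hx, rfl⟩ _ ⟨y, hy, rfl⟩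
    have hpre : ¬ η <+: γ ++ ω (G.pathTerm v γ) := by
      intro hpre
      rcases hmm.eq_or_lt with rfl | hlt
      · refine hne ?_
        have hγpre := List.prefix_append γ (ω (G.pathTerm v γ))
        rcases le_total η.length γ.length with hlen | hlen
        · rw [hFanti m η hη γ hγ (List.prefix_of_prefix_length_le hpre hγpre hlen)]
        · rw [hFanti m γ hγ η hη (List.prefix_of_prefix_length_le hγpre hpre hlen)]
      · have h1 := G.pathRatio_antitone hpre
        rw [pathRatio_append] at h1
        have h2 : b * ρ ^ m * q ≤ ρ ^ (m + 1) :=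
          calc b * ρ ^ m * q ≤ G.pathRatio γ * G.pathRatio (ω (G.pathTerm v γ)) :=
                mul_le_mul (hFlow m γ hγ) (hqω _) hq.le (G.pathRatio_pos γ).le
            _ ≤ G.pathRatio η := h1
            _ ≤ ρ ^ m' := hFup m' η hη
            _ ≤ ρ ^ (m + 1) := pow_le_pow_of_le_one hρ.le hρ1.le hlt
        rw [pow_succ] at h2
        nlinarith [mul_lt_mul_of_pos_left hρbq (hρpow m)]
    have hnot := pathMap_notMem_image hU hCU (v := v)
      (G.isPathFrom_append.2 ⟨hFpath m γ hγ, hωpath _⟩) (hFpath m' η hη) hpre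
      (x := x) (by rwa [pathTerm_append, hωterm])
    have hfar := lt_dist_pathMap
      ((closedBall_subset_closedBall (hδle _)).trans (hωball (G.pathTerm v η) y (hCU i hy).1)) hnot
    rw [← pathMap_append] at hfar
    refine lt_of_le_of_lt ?_ hfar
    calc 2 * r ≤ 2 * (b * q * δ / 2 * ρ ^ k) := by gcongr
      _ = b * ρ ^ k * δ * q := by ring
      _ ≤ b * ρ ^ k * δ := mul_le_of_le_one_right (by positivity) hq1
      _ ≤ b * ρ ^ m' * δ := by
        gcongr b * ?_ * δ
        exact pow_le_pow_of_le_one hρ.le hρ1.le hmk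
      _ ≤ G.pathRatio η * δ := by
        gcongr
        exact hFlow m' η hη
  let I : Finset (Σ _ : ℕ, List E) := (Finset.range (k + 1)).sigma F
  have hsum : ∑ p ∈ I, coveringNumber (A p) r ≤ coveringNumber (KC v) r := by
    refine sum_coveringNumber_le (hKC.1 v) hr I A ?_ ?_
    · rintro ⟨m, γ⟩ hp _ ⟨x, hx, rfl⟩
      refine mapsTo_pathMap hKC.mapsTo
        (G.isPathFrom_append.2 ⟨hFpath m γ (Finset.mem_sigma.1 hp).2, hωpath _⟩) ?_
      rw [pathTerm_append, hωterm]
      exact hKC.condensation_subset i hx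
    · rintro ⟨m, γ⟩ hp ⟨m', η⟩ hp' hne x hx y hy
      obtain ⟨hm, hγ⟩ := Finset.mem_sigma.1 hp
      obtain ⟨hm', hη⟩ := Finset.mem_sigma.1 hp'
      have hm := Nat.lt_succ_iff.1 (Finset.mem_range.1 hm)
      have hm' := Nat.lt_succ_iff.1 (Finset.mem_range.1 hm')
      rcases le_total m m' with hmm | hmm
      · exact hsep' m m' γ η hmm hm' hγ hη hne x hx y hy
      · rw [dist_comm]
        exact hsep' m' m η γ hmm hm hη hγ hne.symm y hy x hx
  have hpiece : ∀ m ≤ k, ∀ γ ∈ F m, coveringNumber (C i) (ρ ^ (k - m)) ≤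
      coveringNumber (A ⟨m, γ⟩) r := by
    intro m hm γ hγ
    refine coveringNumber_le_image (G.pathRatio_pos _) (G.dist_pathMap _)
      (surjective_of_dist_eq_mul (G.pathRatio_pos _) (G.dist_pathMap _)) (hC i).1 hr ?_
    rw [pathRatio_append]
    calc r ≤ b * q * δ / 2 * ρ ^ k := hrk
      _ ≤ b * q * ρ ^ k := by
        refine mul_le_mul_of_nonneg_right ?_ (hρpow k).le
        nlinarith
      _ = b * ρ ^ m * q * ρ ^ (k - m) := by
        rw [← Nat.add_sub_cancel' hm, pow_add, Nat.add_sub_cancel' hm]; ring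
      _ ≤ _ := by
        refine mul_le_mul_of_nonneg_right ?_ (hρpow _).le
        exact mul_le_mul (hFlow m γ hγ) (hqω _) hq.le (G.pathRatio_pos γ).le
  have hcount : ∑ m ∈ Finset.range (k + 1), (F m).card * coveringNumber (C i) (ρ ^ (k - m)) ≤
      coveringNumber (KC v) r := by
    refine le_trans ?_ hsum
    rw [Finset.sum_sigma]
    refine Finset.sum_le_sum fun m hm => ?_
    rw [← smul_eq_mul]
    exact Finset.card_nsmul_le_sum _ _ _
      fun γ hγ => hpiece m (Nat.lt_succ_iff.1 (Finset.mem_range.1 hm)) γ hγ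
  calc h v / h w₀ * ∑ ℓ ∈ Finset.range (k + 1),
        ρ ^ ((ℓ : ℝ) * s) * (coveringNumber (C i) (ρ ^ ℓ) : ℝ)
      = ∑ m ∈ Finset.range (k + 1), h v / h w₀ *
          (ρ ^ (((k - m : ℕ) : ℝ) * s) * (coveringNumber (C i) (ρ ^ (k - m)) : ℝ)) := by
        rw [Finset.mul_sum]
        exact (Finset.sum_flip fun ℓ => h v / h w₀ *
          (ρ ^ ((ℓ : ℝ) * s) * (coveringNumber (C i) (ρ ^ ℓ) : ℝ))).symm
    _ ≤ ∑ m ∈ Finset.range (k + 1), ρ ^ ((k : ℝ) * s) *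
          ((F m).card * (coveringNumber (C i) (ρ ^ (k - m)) : ℝ)) := by
        refine Finset.sum_le_sum fun m hm => ?_
        have hm := Nat.lt_succ_iff.1 (Finset.mem_range.1 hm)
        have hsplit : ρ ^ ((k : ℝ) * s) = ρ ^ ((m : ℝ) * s) * ρ ^ (((k - m : ℕ) : ℝ) * s) := by
          rw [← Real.rpow_add hρ, Nat.cast_sub hm]
          ring_nf
        rw [hsplit]
        calc _ ≤ ((F m).card * ρ ^ ((m : ℝ) * s)) *
              (ρ ^ (((k - m : ℕ) : ℝ) * s) * (coveringNumber (C i) (ρ ^ (k - m)) : ℝ)) :=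
              mul_le_mul_of_nonneg_right (hcard m) (by positivity)
          _ = _ := by ring
    _ ≤ ρ ^ ((k : ℝ) * s) * (coveringNumber (KC v) r : ℝ) := by
        rw [← Finset.mul_sum]
        refine mul_le_mul_of_nonneg_left ?_ (by positivity)
        exact_mod_cast hcount

end MWGraph

theorem stmt17 {d : ℕ} {V E : Type} [Fintype V] [Fintype E] [DecidableEq V]
    (G : MWGraph d V E) (hSC : G.StronglyConnected)
    (C K KC U : V → Set (Pt d))
    (hC : G.IsCondensation C) (hK : G.IsAttractor K) (hKC : G.IsInhomAttractor C KC)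
    (hU : G.IsOSCWith U) (hUK : ∀ i, (U i ∩ K i).Nonempty)
    (hCU : ∀ i, C i ⊆ closure (U i) \ ⋃ e ∈ {e : E | G.init e = i}, G.S e '' U (G.term e))
    (s0 : ℝ) (hs0 : IsS0 G s0)
 :
    ∀ i j : V, ∃ c a ρ : ℝ, 0 < c ∧ 0 < a ∧ 0 < ρ ∧ ρ < 1 ∧
      ∀ (k : ℕ) (t : ℝ), 0 < t → a * ρ ^ (k + 1) ≤ Real.exp (-t) →
        Real.exp (-t) < a * ρ ^ k →
          c * ∑ ℓ ∈ Finset.range (k + 1),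
              ρ ^ ((ℓ : ℝ) * s0) * (coveringNumber (C i) (ρ ^ ℓ) : ℝ) ≤
            Real.exp (-s0 * t) * (coveringNumber (KC j) (Real.exp (-t)) : ℝ) := by
  intro i j
  obtain ⟨h, h0, ⟨v, hv⟩, hh⟩ := MWGraph.exists_subinvariant hs0.2
  obtain ⟨c, a, ρ, hc, ha, hρ, hρ1, H⟩ := MWGraph.exists_sum_le_coveringNumber hSC hC hK hKC hU
    hUK hCU hs0.1 h0 hh hv i
  obtain ⟨π, -, hπ, hπv⟩ := hSC j v
  have hq := G.pathRatio_pos π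
  have hsub : G.pathMap π '' KC v ⊆ KC j := by
    have := MWGraph.mapsTo_pathMap hKC.mapsTo hπ
    rw [hπv] at this
    exact this.image_subset
  refine ⟨(G.pathRatio π * a * ρ) ^ s0 * c, G.pathRatio π * a, ρ, by positivity, by positivity,
    hρ, hρ1, fun k t _ hlow hup => ?_⟩
  have hr := Real.exp_pos (-t)
  have hN : (coveringNumber (KC v) (Real.exp (-t) / G.pathRatio π) : ℝ) ≤
      coveringNumber (KC j) (Real.exp (-t)) := by
    refine Nat.cast_le.2 (le_trans ?_ (coveringNumber_mono_set (hKC.1 j) hr hsub))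
    exact coveringNumber_le_image hq (G.dist_pathMap π)
      (surjective_of_dist_eq_mul hq (G.dist_pathMap π)) (hKC.1 v) hr (mul_div_cancel₀ _ hq.ne').ge
  have hH := H k (Real.exp (-t) / G.pathRatio π) (div_pos hr hq)
    (by rw [div_le_iff₀ hq]; linarith)
  have hexp : (G.pathRatio π * a * ρ) ^ s0 * ρ ^ ((k : ℝ) * s0) ≤ Real.exp (-s0 * t) := by
    rw [Real.rpow_mul hρ.le, Real.rpow_natCast, ← Real.mul_rpow (by positivity) (by positivity),
      show -s0 * t = -t * s0 by ring, Real.exp_mul]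
    refine Real.rpow_le_rpow (by positivity) ?_ hs0.1
    rw [pow_succ] at hlow
    linarith
  rw [mul_assoc]
  calc _ ≤ (G.pathRatio π * a * ρ) ^ s0 * (ρ ^ ((k : ℝ) * s0) *
        coveringNumber (KC v) (Real.exp (-t) / G.pathRatio π)) :=
        mul_le_mul_of_nonneg_left hH (by positivity)
    _ = (G.pathRatio π * a * ρ) ^ s0 * ρ ^ ((k : ℝ) * s0) *
        coveringNumber (KC v) (Real.exp (-t) / G.pathRatio π) := by ring
    _ ≤ _ := mul_le_mul hexp hN (by positivity) (Real.exp_pos _).le
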